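/- arXiv:2508.17004 — 2 statements merged into one kernel-verified Lean document; each statement's English description precedes it below -/
import Mathlib

section
/- Let τ > 0 and t ∈ ℝ. Let u : ℝ → ℝ be three times differentiable on [t − 2τ, t] with |u'(s)| ≤ M₁, |u''(s)| ≤ M₂, and |u'''(s)| ≤ M₃ for all s ∈ [t − 2τ, t], and let σ : ℝ → ℝ be twice differentiable with |σ'(r)| ≤ k₃ and |σ''(r)| ≤ k₄ for all r ∈ ℝ. Then for any real number P ≥ 0, |(3u(t) − 4u(t − τ) + u(t − 2τ))/(2τ) − u'(t) + (σ(u(t)) − 2σ(u(t − τ)) + σ(u(t − 2τ)))·P| ≤ (M₃ + (k₃·M₂ + k₄·M₁²)·P)·τ². -/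
/-!
The BDF2 part and the extrapolation part are bounded separately. Taylor expansion of `u` backwards
from `t` to second order leaves remainders at most `M₃ h³ / 6` for `h = τ` and `h = 2τ`; with the
weights `4` and `1` they add up to `2 M₃ τ³`, and division by `2τ` gives `M₃ τ²`. The composite
`g = σ ∘ u` satisfies `|g''| = |σ''(u) u'² + σ'(u) u''| ≤ k₃ M₂ + k₄ M₁²`, and first-order Taylor
expansion of `g` at the midpoint `t - τ` in both directions bounds its second difference by
`sup |g''| τ²`. The Taylor remainders come from integrating a bound on the derivative
(`abs_le_of_abs_deriv_le_pow`) repeatedly.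
-/

/-- One integration step: a bound `C x ^ n` on the derivative of a function vanishing at `0`
integrates to `C x ^ (n + 1) / (n + 1)`. -/
lemma abs_le_of_abs_deriv_le_pow {f f' : ℝ → ℝ} {a C : ℝ} (n : ℕ)
    (hf : ∀ x ∈ Set.Icc 0 a, HasDerivAt f (f' x) x) (h0 : f 0 = 0)
    (hb : ∀ x ∈ Set.Icc 0 a, |f' x| ≤ C * x ^ n) :
    ∀ x ∈ Set.Icc 0 a, |f x| ≤ C / (n + 1) * x ^ (n + 1) := by
  intro x hx
  refine image_norm_le_of_norm_deriv_right_le_deriv_boundary (f := f) (f' := f')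
    (B := fun x => C / (n + 1) * x ^ (n + 1)) (B' := fun x => C * x ^ n)
    (fun y hy => (hf y hy).continuousAt.continuousWithinAt)
    (fun y hy => (hf y (Set.Ico_subset_Icc_self hy)).hasDerivWithinAt)
    (by simp [h0]) (fun y => ?_) (fun y hy => hb y (Set.Ico_subset_Icc_self hy)) hx
  have h : (n : ℝ) + 1 ≠ 0 := by positivity
  refine ((hasDerivAt_pow (n + 1) y).const_mul (C / ((n : ℝ) + 1))).congr_deriv ?_
  rw [Nat.add_sub_cancel]
  push_cast
  field_simp

lemma abs_taylor_one_le {f f' f'' : ℝ → ℝ} {a K : ℝ}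
    (hf : ∀ x ∈ Set.Icc 0 a, HasDerivAt f (f' x) x)
    (hf' : ∀ x ∈ Set.Icc 0 a, HasDerivAt f' (f'' x) x)
    (hK : ∀ x ∈ Set.Icc 0 a, |f'' x| ≤ K) :
    ∀ x ∈ Set.Icc 0 a, |f x - f 0 - x * f' 0| ≤ K / 2 * x ^ 2 := by
  have h1 := abs_le_of_abs_deriv_le_pow (f := fun x => f' x - f' 0) (C := K) 0
    (fun x hx => (hf' x hx).sub_const _) (by simp) (fun x hx => by simpa using hK x hx)
  have h2 := abs_le_of_abs_deriv_le_pow (f := fun x => f x - f 0 - x * f' 0) (C := K) 1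
    (f' := fun x => f' x - f' 0)
    (fun x hx => by
      simpa using ((hf x hx).sub_const (f 0)).fun_sub ((hasDerivAt_id' x).mul_const (f' 0)))
    (by simp) (fun x hx => by simpa using h1 x hx)
  intro x hx
  have := h2 x hx
  norm_num at this
  exact this

lemma abs_taylor_two_le {f f' f'' f''' : ℝ → ℝ} {a K : ℝ}
    (hf : ∀ x ∈ Set.Icc 0 a, HasDerivAt f (f' x) x)
    (hf' : ∀ x ∈ Set.Icc 0 a, HasDerivAt f' (f'' x) x)
    (hf'' : ∀ x ∈ Set.Icc 0 a, HasDerivAt f'' (f''' x) x)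
    (hK : ∀ x ∈ Set.Icc 0 a, |f''' x| ≤ K) :
    ∀ x ∈ Set.Icc 0 a, |f x - f 0 - x * f' 0 - x ^ 2 / 2 * f'' 0| ≤ K / 6 * x ^ 3 := by
  have h1 := abs_taylor_one_le hf' hf'' hK
  have h2 := abs_le_of_abs_deriv_le_pow (C := K / 2) 2
    (f := fun x => f x - f 0 - x * f' 0 - x ^ 2 / 2 * f'' 0)
    (f' := fun x => f' x - f' 0 - x * f'' 0)
    (fun x hx => by
      have h := (((hf x hx).sub_const (f 0)).fun_sub ((hasDerivAt_id' x).mul_const (f' 0))).fun_sub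
        (((hasDerivAt_pow 2 x).div_const 2).mul_const (f'' 0))
      refine h.congr_deriv ?_
      norm_num)
    (by simp) h1
  intro x hx
  have h3 := h2 x hx
  norm_num at h3
  linarith

/-- The second difference of `g` with step `τ` is at most `sup |g''| τ²`. -/
lemma abs_second_difference_le {g g' g'' : ℝ → ℝ} {t τ K : ℝ} (hτ : 0 < τ)
    (hg : ∀ s ∈ Set.Icc (t - 2 * τ) t, HasDerivAt g (g' s) s)
    (hg' : ∀ s ∈ Set.Icc (t - 2 * τ) t, HasDerivAt g' (g'' s) s)
    (hK : ∀ s ∈ Set.Icc (t - 2 * τ) t, |g'' s| ≤ K) :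
    |g t - 2 * g (t - τ) + g (t - 2 * τ)| ≤ K * τ ^ 2 := by
  have mp : ∀ x ∈ Set.Icc 0 τ, t - τ + x ∈ Set.Icc (t - 2 * τ) t := fun x hx =>
    ⟨by linarith [hx.1], by linarith [hx.2]⟩
  have mm : ∀ x ∈ Set.Icc 0 τ, t - τ - x ∈ Set.Icc (t - 2 * τ) t := fun x hx =>
    ⟨by linarith [hx.2], by linarith [hx.1]⟩
  have hp := abs_taylor_one_le (f := fun x => g (t - τ + x)) (f' := fun x => g' (t - τ + x))
    (f'' := fun x => g'' (t - τ + x)) (fun x hx => (hg _ (mp x hx)).comp_const_add _ _)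
    (fun x hx => (hg' _ (mp x hx)).comp_const_add _ _) (fun x hx => hK _ (mp x hx))
    τ ⟨hτ.le, le_rfl⟩
  have hm := abs_taylor_one_le (f := fun x => g (t - τ - x)) (f' := fun x => -g' (t - τ - x))
    (f'' := fun x => g'' (t - τ - x)) (fun x hx => (hg _ (mm x hx)).comp_const_sub _ _)
    (fun x hx => by simpa using ((hg' _ (mm x hx)).comp_const_sub _ _).fun_neg)
    (fun x hx => hK _ (mm x hx)) τ ⟨hτ.le, le_rfl⟩
  have e : t - τ - τ = t - 2 * τ := by ring
  simp only [sub_add_cancel, add_zero, sub_zero, e] at hp hm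
  rw [abs_le] at *
  constructor <;> linarith [hp.1, hp.2, hm.1, hm.2]

lemma abs_bdf2_sub_deriv_le {u u' u'' u''' : ℝ → ℝ} {t τ M : ℝ} (hτ : 0 < τ)
    (hu : ∀ s ∈ Set.Icc (t - 2 * τ) t, HasDerivAt u (u' s) s)
    (hu' : ∀ s ∈ Set.Icc (t - 2 * τ) t, HasDerivAt u' (u'' s) s)
    (hu'' : ∀ s ∈ Set.Icc (t - 2 * τ) t, HasDerivAt u'' (u''' s) s)
    (hM : ∀ s ∈ Set.Icc (t - 2 * τ) t, |u''' s| ≤ M) :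
    |(3 * u t - 4 * u (t - τ) + u (t - 2 * τ)) / (2 * τ) - u' t| ≤ M * τ ^ 2 := by
  have mm : ∀ x ∈ Set.Icc 0 (2 * τ), t - x ∈ Set.Icc (t - 2 * τ) t := fun x hx =>
    ⟨by linarith [hx.2], by linarith [hx.1]⟩
  have h := abs_taylor_two_le (f := fun x => u (t - x)) (f' := fun x => -u' (t - x))
    (f'' := fun x => u'' (t - x)) (f''' := fun x => -u''' (t - x))
    (fun x hx => (hu _ (mm x hx)).comp_const_sub _ _)
    (fun x hx => by simpa using ((hu' _ (mm x hx)).comp_const_sub _ _).fun_neg)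
    (fun x hx => (hu'' _ (mm x hx)).comp_const_sub _ _)
    (fun x hx => by simpa using hM _ (mm x hx))
  have h1 := h τ ⟨hτ.le, by linarith⟩
  have h2 := h (2 * τ) ⟨by linarith, le_rfl⟩
  simp only [sub_zero] at h1 h2
  have e : (3 * u t - 4 * u (t - τ) + u (t - 2 * τ)) / (2 * τ) - u' t =
      (3 * u t - 4 * u (t - τ) + u (t - 2 * τ) - 2 * τ * u' t) / (2 * τ) := by
    field_simp
  rw [e, abs_div, abs_of_pos (by positivity : 0 < 2 * τ), div_le_iff₀ (by positivity)]
  rw [abs_le] at *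
  constructor <;> nlinarith [h1.1, h1.2, h2.1, h2.2]


/-- Pointwise truncation error bound `|R_uⁿ| ≤ C τ²` for the implicit–explicit
second-order BDF scheme, with `P` playing the role of `|∇φⁿ(x)|²`. -/
theorem bdf2_full_truncation_error
    (τ t M₁ M₂ M₃ k₃ k₄ : ℝ) (hτ : 0 < τ)
    (u u' u'' u''' : ℝ → ℝ) (σ σ' σ'' : ℝ → ℝ)
    (hu : ∀ s ∈ Set.Icc (t - 2 * τ) t, HasDerivAt u (u' s) s)
    (hu' : ∀ s ∈ Set.Icc (t - 2 * τ) t, HasDerivAt u' (u'' s) s)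
    (hu'' : ∀ s ∈ Set.Icc (t - 2 * τ) t, HasDerivAt u'' (u''' s) s)
    (hM₁ : ∀ s ∈ Set.Icc (t - 2 * τ) t, |u' s| ≤ M₁)
    (hM₂ : ∀ s ∈ Set.Icc (t - 2 * τ) t, |u'' s| ≤ M₂)
    (hM₃ : ∀ s ∈ Set.Icc (t - 2 * τ) t, |u''' s| ≤ M₃)
    (hσ : ∀ r : ℝ, HasDerivAt σ (σ' r) r)
    (hσ' : ∀ r : ℝ, HasDerivAt σ' (σ'' r) r)
    (hk₃ : ∀ r : ℝ, |σ' r| ≤ k₃)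
    (hk₄ : ∀ r : ℝ, |σ'' r| ≤ k₄)
    (P : ℝ) (hP : 0 ≤ P) :
    |(3 * u t - 4 * u (t - τ) + u (t - 2 * τ)) / (2 * τ) - u' t +
        (σ (u t) - 2 * σ (u (t - τ)) + σ (u (t - 2 * τ))) * P| ≤
      (M₃ + (k₃ * M₂ + k₄ * M₁ ^ 2) * P) * τ ^ 2 := by
  have h1 := abs_bdf2_sub_deriv_le hτ hu hu' hu'' hM₃
  have h2 := abs_second_difference_le (g := fun s => σ (u s)) (g' := fun s => σ' (u s) * u' s)
    (g'' := fun s => σ'' (u s) * u' s * u' s + σ' (u s) * u'' s) (K := k₃ * M₂ + k₄ * M₁ ^ 2) hτ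
    (fun s hs => (hσ (u s)).comp s (hu s hs))
    (fun s hs => ((hσ' (u s)).comp s (hu s hs)).mul (hu' s hs))
    (fun s hs => by
      have k3 : 0 ≤ k₃ := (abs_nonneg _).trans (hk₃ 0)
      have k4 : 0 ≤ k₄ := (abs_nonneg _).trans (hk₄ 0)
      have m1 : 0 ≤ M₁ := (abs_nonneg _).trans (hM₁ s hs)
      calc |σ'' (u s) * u' s * u' s + σ' (u s) * u'' s|
          ≤ |σ'' (u s)| * |u' s| * |u' s| + |σ' (u s)| * |u'' s| := by
            simpa only [abs_mul] using abs_add_le (σ'' (u s) * u' s * u' s) (σ' (u s) * u'' s)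
        _ ≤ k₄ * M₁ * M₁ + k₃ * M₂ := by
            gcongr
            exacts [hk₄ _, hM₁ s hs, hM₁ s hs, hk₃ _, hM₂ s hs]
        _ = k₃ * M₂ + k₄ * M₁ ^ 2 := by ring)
  refine (abs_add_le _ _).trans ?_
  rw [abs_mul, abs_of_nonneg hP]
  linarith [mul_le_mul_of_nonneg_right h2 hP]
end

section
/- Let E be a real normed vector space, let τ > 0, let t ∈ ℝ, and let f : ℝ → E be four times differentiable on the interval [t − 3τ, t] with ‖f''''(s)‖ ≤ M for all s ∈ [t − 3τ, t]. Then ‖(11f(t) − 18f(t − τ) + 9f(t − 2τ) − 2f(t − 3τ))/(6τ) − f'(t)‖ ≤ (9/4)·M·τ³. -/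
/-!
Expand `f` at `t` by Taylor's formula to third order: for `0 ≤ h ≤ 3τ`,
`f (t - h) = f t - h f' t + (h² / 2) f'' t - (h³ / 6) f''' t + R h` with `‖R h‖ ≤ M h⁴ / 24`
(`norm_taylor_remainder_le`). The weights of the BDF operator are chosen so that the terms in
`f t`, `f'' t` and `f''' t` cancel and `f' t` has coefficient one, so the error is
`(-18 R τ + 9 R (2τ) - 2 R (3τ)) / (6τ)`, of norm at most
`(18 + 9 · 16 + 2 · 81) / (24 · 6) · M τ³ = (9 / 4) M τ³`.

The remainder bound comes from integrating the bound on `f''''` four times in the form of the mean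
value inequality (`norm_le_pow_succ_of_deriv`), which needs neither continuity of `f''''` nor
completeness of `E`.
-/

/-- Mean value inequality with a monomial bound on the derivative. -/
lemma norm_le_pow_succ_of_deriv {E : Type*} [NormedAddCommGroup E] [NormedSpace ℝ E]
    {g g' : ℝ → E} {T C : ℝ} (n : ℕ) (h0 : g 0 = 0)
    (hg : ∀ h ∈ Set.Icc 0 T, HasDerivAt g (g' h) h)
    (hb : ∀ h ∈ Set.Icc 0 T, ‖g' h‖ ≤ C * h ^ n) :
    ∀ h ∈ Set.Icc 0 T, ‖g h‖ ≤ C / (n + 1) * h ^ (n + 1) := by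
  have hn : (n : ℝ) + 1 ≠ 0 := by positivity
  have hB : ∀ x : ℝ, HasDerivAt (fun h : ℝ => C / (n + 1) * h ^ (n + 1)) (C * x ^ n) x := by
    intro x
    refine ((hasDerivAt_pow (n + 1) x).const_mul (C / ((n : ℝ) + 1))).congr_deriv ?_
    rw [Nat.add_sub_cancel, Nat.cast_add_one, ← mul_assoc, div_mul_cancel₀ C hn]
  intro h hh
  exact image_norm_le_of_norm_deriv_right_le_deriv_boundary
    (fun x hx => (hg x hx).continuousAt.continuousWithinAt)
    (fun x hx => (hg x (Set.Ico_subset_Icc_self hx)).hasDerivWithinAt)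
    (by simp [h0]) hB (fun x hx => hb x (Set.Ico_subset_Icc_self hx)) hh

/-- Third-order Taylor expansion at the right end point `t`, with the sharp constant `1 / 24`. -/
lemma norm_taylor_remainder_le {E : Type*} [NormedAddCommGroup E] [NormedSpace ℝ E]
    {T t M : ℝ} {f f' f'' f''' f'''' : ℝ → E}
    (hf : ∀ s ∈ Set.Icc (t - T) t, HasDerivAt f (f' s) s)
    (hf' : ∀ s ∈ Set.Icc (t - T) t, HasDerivAt f' (f'' s) s)
    (hf'' : ∀ s ∈ Set.Icc (t - T) t, HasDerivAt f'' (f''' s) s)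
    (hf''' : ∀ s ∈ Set.Icc (t - T) t, HasDerivAt f''' (f'''' s) s)
    (hM : ∀ s ∈ Set.Icc (t - T) t, ‖f'''' s‖ ≤ M) :
    ∀ h ∈ Set.Icc 0 T,
      ‖f (t - h) - f t + h • f' t - (h ^ 2 / 2) • f'' t + (h ^ 3 / 6) • f''' t‖
        ≤ M / 24 * h ^ 4 := by
  have mem : ∀ h ∈ Set.Icc 0 T, t - h ∈ Set.Icc (t - T) t := fun h hh =>
    ⟨by linarith [hh.2], by linarith [hh.1]⟩
  have refl : ∀ {u u' : ℝ → E}, (∀ s ∈ Set.Icc (t - T) t, HasDerivAt u (u' s) s) →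
      ∀ h ∈ Set.Icc 0 T, HasDerivAt (fun h => u (t - h)) (-u' (t - h)) h := by
    intro u u' hu h hh
    simpa [Function.comp_def] using (hu _ (mem h hh)).scomp h ((hasDerivAt_id h).const_sub t)
  have d1 : ∀ (v : E) (h : ℝ), HasDerivAt (fun h : ℝ => h • v) v h := by
    intro v h
    simpa using (hasDerivAt_id h).smul_const v
  have d2 : ∀ (v : E) (h : ℝ), HasDerivAt (fun h : ℝ => (h ^ 2 / 2) • v) (h • v) h := by
    intro v h
    convert ((hasDerivAt_pow 2 h).div_const 2).smul_const v using 2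
    norm_num
  have d3 : ∀ (v : E) (h : ℝ), HasDerivAt (fun h : ℝ => (h ^ 3 / 6) • v) ((h ^ 2 / 2) • v) h := by
    intro v h
    convert ((hasDerivAt_pow 3 h).div_const 6).smul_const v using 2
    norm_num
    ring
  -- The remainders of `f'''`, `f''`, `f'` and `f`: each is, up to sign, the derivative of the next.
  have r3 : ∀ h ∈ Set.Icc 0 T, ‖f''' (t - h) - f''' t‖ ≤ M * h ^ 1 := by
    have := norm_le_pow_succ_of_deriv (g := fun h => f''' (t - h) - f''' t) (C := M) 0 (by simp)
      (fun h hh => (refl hf''' h hh).sub_const _)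
      (fun h hh => by simpa using hM _ (mem h hh))
    simpa using this
  have r2 : ∀ h ∈ Set.Icc 0 T, ‖f'' (t - h) - f'' t + h • f''' t‖ ≤ M / 2 * h ^ 2 := by
    have := norm_le_pow_succ_of_deriv (g := fun h => f'' (t - h) - f'' t + h • f''' t) 1 (by simp)
      (fun h hh => ((refl hf'' h hh).sub_const _).add (d1 _ h))
      (fun h hh => by
        convert r3 h hh using 1
        rw [← norm_neg]; congr 1; abel)
    convert this using 4
    norm_num
  have r1 : ∀ h ∈ Set.Icc 0 T,
      ‖f' (t - h) - f' t + h • f'' t - (h ^ 2 / 2) • f''' t‖ ≤ M / 6 * h ^ 3 := by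
    have := norm_le_pow_succ_of_deriv
      (g := fun h => f' (t - h) - f' t + h • f'' t - (h ^ 2 / 2) • f''' t) 2 (by simp)
      (fun h hh => (((refl hf' h hh).sub_const _).add (d1 _ h)).sub (d2 _ h))
      (fun h hh => by
        convert r2 h hh using 1
        rw [← norm_neg]; congr 1; abel)
    convert this using 4
    norm_num
    ring
  have := norm_le_pow_succ_of_deriv
    (g := fun h => f (t - h) - f t + h • f' t - (h ^ 2 / 2) • f'' t + (h ^ 3 / 6) • f''' t) 3
    (by simp)
    (fun h hh => ((((refl hf h hh).sub_const _).add (d1 _ h)).sub (d2 _ h)).add (d3 _ h))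
    (fun h hh => by
      convert r1 h hh using 1
      rw [← norm_neg]; congr 1; abel)
  convert this using 4
  norm_num
  ring

/-- Truncation error of the third-order BDF operator: `D*_τ` approximates the first
derivative to third order in `τ`. -/
theorem bdf3_truncation_error
    {E : Type*} [NormedAddCommGroup E] [NormedSpace ℝ E]
    (τ t M : ℝ) (hτ : 0 < τ)
    (f f' f'' f''' f'''' : ℝ → E)
    (hf : ∀ s ∈ Set.Icc (t - 3 * τ) t, HasDerivAt f (f' s) s)
    (hf' : ∀ s ∈ Set.Icc (t - 3 * τ) t, HasDerivAt f' (f'' s) s)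
    (hf'' : ∀ s ∈ Set.Icc (t - 3 * τ) t, HasDerivAt f'' (f''' s) s)
    (hf''' : ∀ s ∈ Set.Icc (t - 3 * τ) t, HasDerivAt f''' (f'''' s) s)
    (hM : ∀ s ∈ Set.Icc (t - 3 * τ) t, ‖f'''' s‖ ≤ M) :
    ‖(1 / (6 * τ)) • ((11 : ℝ) • f t - (18 : ℝ) • f (t - τ) + (9 : ℝ) • f (t - 2 * τ)
        - (2 : ℝ) • f (t - 3 * τ)) - f' t‖ ≤ (9 / 4) * M * τ ^ 3 := by
  have R := norm_taylor_remainder_le hf hf' hf'' hf''' hM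
  have R1 := R τ ⟨by linarith, by linarith⟩
  have R2 := R (2 * τ) ⟨by linarith, by linarith⟩
  have R3 := R (3 * τ) ⟨by linarith, by linarith⟩
  -- `a`, `b`, `c` are the Taylor remainders at the three back points.
  set a := f (t - τ) - f t + τ • f' t - (τ ^ 2 / 2) • f'' t + (τ ^ 3 / 6) • f''' t with ha
  set b := f (t - 2 * τ) - f t + (2 * τ) • f' t - ((2 * τ) ^ 2 / 2) • f'' t
    + ((2 * τ) ^ 3 / 6) • f''' t with hb
  set c := f (t - 3 * τ) - f t + (3 * τ) • f' t - ((3 * τ) ^ 2 / 2) • f'' t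
    + ((3 * τ) ^ 3 / 6) • f''' t with hc
  have key : (1 / (6 * τ)) • ((11 : ℝ) • f t - (18 : ℝ) • f (t - τ) + (9 : ℝ) • f (t - 2 * τ)
        - (2 : ℝ) • f (t - 3 * τ)) - f' t
      = (1 / (6 * τ)) • (-(18 : ℝ) • a + (9 : ℝ) • b - (2 : ℝ) • c) := by
    rw [ha, hb, hc]
    match_scalars <;> field_simp <;> ring
  have hn : ‖-(18 : ℝ) • a + (9 : ℝ) • b - (2 : ℝ) • c‖ ≤ 18 * ‖a‖ + 9 * ‖b‖ + 2 * ‖c‖ := by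
    refine (norm_sub_le _ _).trans ((add_le_add_left (norm_add_le _ _) _).trans ?_)
    simp [norm_smul]
  rw [key, norm_smul, Real.norm_of_nonneg (by positivity)]
  calc 1 / (6 * τ) * ‖-(18 : ℝ) • a + (9 : ℝ) • b - (2 : ℝ) • c‖
      ≤ 1 / (6 * τ) * (27 / 2 * M * τ ^ 4) := by
        gcongr
        linarith
    _ = 9 / 4 * M * τ ^ 3 := by
        field_simp
        ring
end
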